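/- Let ĝ(φ,θ) = Σ_{k=0}^{N} γ^k · Σ_τ P_k(φ,θ)(τ) · ∂_φ log(π φ s_k a_k) · Q̂ φ θ s_k a_k be the finite-horizon in-sim stochastic policy gradient. Then for every (φ,θ) the partial derivative of ĝ with respect to the policy parameter φ exists and equals Σ_{k=0}^{N} γ^k · Σ_τ P_k(φ,θ)(τ) · ( ∂²_{φφ} log(π φ s_k a_k) · Q̂ φ θ s_k a_k + ∂_φ log(π φ s_k a_k) · ∂_φ (Q̂ φ θ s_k a_k) + ∂_φ log(π φ s_k a_k) · Q̂ φ θ s_k a_k · Σ_{i=0}^{k} ∂_φ log(π φ s_i a_i) ), i.e., it decomposes into a Hessian term, a critic-sensitivity term, and a distribution-sensitivity term. (Decomposition of ∇_φ ĝ used in Theorem 1, Eq. (19).) -/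

import Mathlib

/-!
The policy enters the weight of a trajectory only through the product `∏ i, π φ (s i) (a i)`, so
the log-derivative trick `g' = g * (g' / g)` differentiates the weight into itself times the sum of
the scores `∂_φ log π` along the trajectory. The three terms of the sensitivity are then the product
rule for weight × score × critic, summed over the finitely many trajectories. Expressing the scores
by `logDeriv` instead of `deriv (log ∘ ·)` lets the argument run over any normed field.
-/

section LogDeriv

variable {𝕜 𝕜' : Type*} [NontriviallyNormedField 𝕜] [NontriviallyNormedField 𝕜']
  [NormedAlgebra 𝕜 𝕜'] {x : 𝕜}

lemma hasDerivAt_self_mul_logDeriv {g : 𝕜 → 𝕜'} (hg : DifferentiableAt 𝕜 g x) (hx : g x ≠ 0) :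
    HasDerivAt g (g x * logDeriv g x) x := by
  simpa only [logDeriv_apply, mul_div_cancel₀ _ hx] using hg.hasDerivAt

lemma hasDerivAt_prod_self_mul_sum_logDeriv {ι : Type*} {s : Finset ι} {g : ι → 𝕜 → 𝕜'}
    (hg : ∀ i ∈ s, DifferentiableAt 𝕜 (g i) x) (hx : ∀ i ∈ s, g i x ≠ 0) :
    HasDerivAt (fun y ↦ ∏ i ∈ s, g i y) ((∏ i ∈ s, g i x) * ∑ i ∈ s, logDeriv (g i) x) x := by
  rw [← logDeriv_prod hx hg]
  exact hasDerivAt_self_mul_logDeriv (.fun_finsetProd hg) (Finset.prod_ne_zero_iff.2 hx)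

lemma differentiableAt_logDeriv {g : 𝕜 → 𝕜'} (hg : DifferentiableAt 𝕜 g x)
    (hg' : DifferentiableAt 𝕜 (deriv g) x) (hx : g x ≠ 0) : DifferentiableAt 𝕜 (logDeriv g) x :=
  hg'.div hg hx

end LogDeriv

section TrajectoryWeight

variable {S A : Type*} {k : ℕ}

/-- The weight `P_k` of a trajectory `τ = ((s_0, …, s_k), (a_0, …, a_k))` under the initial
weights `ρ₀`, the policy `p` and the transition kernel `f`, all taken at fixed parameters.
The factors are grouped as in the paper, with the last action outside the product over
transitions. -/
def trajectoryWeight {R : Type*} [CommMonoid R] (ρ₀ : S → R) (p : S → A → R) (f : S → A → S → R)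
    (τ : (Fin (k + 1) → S) × (Fin (k + 1) → A)) : R :=
  ρ₀ (τ.1 0) * p (τ.1 (Fin.last k)) (τ.2 (Fin.last k)) *
    ∏ i : Fin k, (f (τ.1 i.castSucc) (τ.2 i.castSucc) (τ.1 i.succ) *
      p (τ.1 i.castSucc) (τ.2 i.castSucc))

lemma trajectoryWeight_eq_mul_prod_policy {R : Type*} [CommMonoid R] (ρ₀ : S → R)
    (p : S → A → R) (f : S → A → S → R) (τ : (Fin (k + 1) → S) × (Fin (k + 1) → A)) :
    trajectoryWeight ρ₀ p f τ =
      (ρ₀ (τ.1 0) * ∏ i : Fin k, f (τ.1 i.castSucc) (τ.2 i.castSucc) (τ.1 i.succ)) *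
        ∏ i, p (τ.1 i) (τ.2 i) := by
  rw [trajectoryWeight, Fin.prod_univ_castSucc, Finset.prod_mul_distrib]
  ac_rfl

variable {𝕜 𝕜' : Type*} [NontriviallyNormedField 𝕜] [NontriviallyNormedField 𝕜']
  [NormedAlgebra 𝕜 𝕜'] {π : 𝕜 → S → A → 𝕜'} {φ : 𝕜}

lemma hasDerivAt_trajectoryWeight (ρ₀ : S → 𝕜') (f : S → A → S → 𝕜')
    (hπ : ∀ s a, DifferentiableAt 𝕜 (π · s a) φ) (hπ₀ : ∀ s a, π φ s a ≠ 0)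
    (τ : (Fin (k + 1) → S) × (Fin (k + 1) → A)) :
    HasDerivAt (fun φ' ↦ trajectoryWeight ρ₀ (π φ') f τ)
      (trajectoryWeight ρ₀ (π φ) f τ * ∑ i, logDeriv (π · (τ.1 i) (τ.2 i)) φ) φ := by
  simp only [trajectoryWeight_eq_mul_prod_policy, mul_assoc _ (∏ _, _) (∑ _, _)]
  exact (hasDerivAt_prod_self_mul_sum_logDeriv (fun i _ ↦ hπ (τ.1 i) (τ.2 i))
    fun i _ ↦ hπ₀ (τ.1 i) (τ.2 i)).const_mul _

lemma hasDerivAt_trajectoryWeight_mul_score_mul {Q : 𝕜 → 𝕜'} {s : S} {a : A} (ρ₀ : S → 𝕜')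
    (f : S → A → S → 𝕜') (hπ : ∀ s a, DifferentiableAt 𝕜 (π · s a) φ)
    (hπ₀ : ∀ s a, π φ s a ≠ 0) (hπ' : DifferentiableAt 𝕜 (deriv (π · s a)) φ)
    (hQ : DifferentiableAt 𝕜 Q φ) (τ : (Fin (k + 1) → S) × (Fin (k + 1) → A)) :
    HasDerivAt (fun φ' ↦ trajectoryWeight ρ₀ (π φ') f τ * logDeriv (π · s a) φ' * Q φ')
      (trajectoryWeight ρ₀ (π φ) f τ *
        (deriv (logDeriv (π · s a)) φ * Q φ + logDeriv (π · s a) φ * deriv Q φ +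
          logDeriv (π · s a) φ * Q φ * ∑ i, logDeriv (π · (τ.1 i) (τ.2 i)) φ)) φ := by
  have weight_deriv := hasDerivAt_trajectoryWeight ρ₀ f hπ hπ₀ τ
  have score_deriv := (differentiableAt_logDeriv (hπ s a) hπ' (hπ₀ s a)).hasDerivAt
  refine ((weight_deriv.fun_mul score_deriv).fun_mul hQ.hasDerivAt).congr_deriv ?_
  ring

theorem spg_sensitivity_wrt_policy_params_general [Fintype S] [Fintype A] (N : ℕ) (γ : 𝕜')
    (ρ₀ : S → 𝕜') (f : S → A → S → 𝕜') {Q : 𝕜 → S → A → 𝕜'}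
    (hπ : ∀ s a, Differentiable 𝕜 (π · s a)) (hπ₀ : ∀ s a, π φ s a ≠ 0)
    (hπ' : ∀ s a, DifferentiableAt 𝕜 (deriv (π · s a)) φ)
    (hQ : ∀ s a, DifferentiableAt 𝕜 (Q · s a) φ) :
    HasDerivAt
      (fun φ' ↦ ∑ k ∈ Finset.range (N + 1), γ ^ k *
        ∑ τ : (Fin (k + 1) → S) × (Fin (k + 1) → A),
          trajectoryWeight ρ₀ (π φ') f τ *
            logDeriv (π · (τ.1 (Fin.last k)) (τ.2 (Fin.last k))) φ' *
            Q φ' (τ.1 (Fin.last k)) (τ.2 (Fin.last k)))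
      (∑ k ∈ Finset.range (N + 1), γ ^ k *
        ∑ τ : (Fin (k + 1) → S) × (Fin (k + 1) → A),
          trajectoryWeight ρ₀ (π φ) f τ *
            (deriv (logDeriv (π · (τ.1 (Fin.last k)) (τ.2 (Fin.last k)))) φ *
                Q φ (τ.1 (Fin.last k)) (τ.2 (Fin.last k)) +
              logDeriv (π · (τ.1 (Fin.last k)) (τ.2 (Fin.last k))) φ *
                deriv (Q · (τ.1 (Fin.last k)) (τ.2 (Fin.last k))) φ +
              logDeriv (π · (τ.1 (Fin.last k)) (τ.2 (Fin.last k))) φ *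
                Q φ (τ.1 (Fin.last k)) (τ.2 (Fin.last k)) *
                ∑ i, logDeriv (π · (τ.1 i) (τ.2 i)) φ)) φ :=
  .fun_sum fun _ _ ↦ .const_mul _ <| .fun_sum fun τ _ ↦
    hasDerivAt_trajectoryWeight_mul_score_mul ρ₀ f (fun s a ↦ (hπ s a).differentiableAt) hπ₀
      (hπ' _ _) (hQ _ _) τ

end TrajectoryWeight

lemma deriv_log_eq_logDeriv {g : ℝ → ℝ} (hg : Differentiable ℝ g) (hg₀ : ∀ x, g x ≠ 0) :
    deriv (fun x ↦ Real.log (g x)) = logDeriv g :=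
  funext fun x ↦ Real.deriv_log_comp_eq_logDeriv (hg x) (hg₀ x)

/-- Decomposition of `∇_φ ĝ` (used in Theorem 1, Eq. (19)): the partial derivative of
the finite-horizon in-sim stochastic policy gradient w.r.t. the policy parameter `φ`
exists and decomposes into a Hessian term, a critic-sensitivity term, and a
distribution-sensitivity term. -/
theorem spg_sensitivity_wrt_policy_params
    {S A : Type*} [Fintype S] [Fintype A] [Nonempty S] [Nonempty A]
    (N : ℕ) (γ : ℝ) (ρ0 : S → ℝ)
    (π : ℝ → S → A → ℝ) (f : ℝ → S → A → S → ℝ)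
    (Qh : ℝ → ℝ → S → A → ℝ)
    (hπpos : ∀ φ s a, 0 < π φ s a)
    (hπdiff : ∀ s a, Differentiable ℝ (fun φ => π φ s a))
    (hπdiff2 : ∀ s a, Differentiable ℝ (deriv (fun φ => π φ s a)))
    (hfpos : ∀ θ s a s', 0 < f θ s a s')
    (hfdiff : ∀ s a s', Differentiable ℝ (fun θ => f θ s a s'))
    (hQdiffφ : ∀ θ s a, Differentiable ℝ (fun φ => Qh φ θ s a))
    (hQdiffθ : ∀ φ s a, Differentiable ℝ (fun θ => Qh φ θ s a))
    (P : ∀ k : ℕ, ℝ → ℝ → ((Fin (k + 1) → S) × (Fin (k + 1) → A)) → ℝ)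
    (hP : ∀ k φ θ τ, P k φ θ τ =
      ρ0 (τ.1 0) * π φ (τ.1 (Fin.last k)) (τ.2 (Fin.last k)) *
        ∏ i : Fin k,
          (f θ (τ.1 i.castSucc) (τ.2 i.castSucc) (τ.1 i.succ) *
            π φ (τ.1 i.castSucc) (τ.2 i.castSucc)))
    (φ θ : ℝ) :
    HasDerivAt
      (fun φ' => ∑ k ∈ Finset.range (N + 1), γ ^ k *
        ∑ τ : (Fin (k + 1) → S) × (Fin (k + 1) → A),
          P k φ' θ τ *
            deriv (fun φ'' => Real.log (π φ'' (τ.1 (Fin.last k)) (τ.2 (Fin.last k)))) φ' *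
            Qh φ' θ (τ.1 (Fin.last k)) (τ.2 (Fin.last k)))
      (∑ k ∈ Finset.range (N + 1), γ ^ k *
        ∑ τ : (Fin (k + 1) → S) × (Fin (k + 1) → A),
          P k φ θ τ *
            (deriv (deriv (fun φ' => Real.log (π φ' (τ.1 (Fin.last k)) (τ.2 (Fin.last k))))) φ *
                Qh φ θ (τ.1 (Fin.last k)) (τ.2 (Fin.last k)) +
              deriv (fun φ' => Real.log (π φ' (τ.1 (Fin.last k)) (τ.2 (Fin.last k)))) φ *
                deriv (fun φ' => Qh φ' θ (τ.1 (Fin.last k)) (τ.2 (Fin.last k))) φ +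
              deriv (fun φ' => Real.log (π φ' (τ.1 (Fin.last k)) (τ.2 (Fin.last k)))) φ *
                Qh φ θ (τ.1 (Fin.last k)) (τ.2 (Fin.last k)) *
                ∑ i : Fin (k + 1),
                  deriv (fun φ' => Real.log (π φ' (τ.1 i) (τ.2 i))) φ)) φ := by
  have score_eq (s a) := deriv_log_eq_logDeriv (hπdiff s a) fun φ ↦ (hπpos φ s a).ne'
  simpa only [hP, score_eq, trajectoryWeight] using
    spg_sensitivity_wrt_policy_params_general N γ ρ0 (f θ) hπdiff (fun s a ↦ (hπpos φ s a).ne')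
      (fun s a ↦ hπdiff2 s a φ) (fun s a ↦ hQdiffφ θ s a φ)
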